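/- For every α with 0 ≤ α < 2 there exists a constant C_α > 0, depending only on α, such that the following holds: for every β ≥ 0, every M > 0, and every a with 0 < a ≤ M/2, the function A(a) := ∫_0^{M/max(β,1)} ( ∫_{βy₂}^{M} (a−y₁)/((a−y₁)² + y₂²)^{1+α/2} dy₁ ) dy₂ is twice differentiable at a and satisfies |A″(a) − F(α,β)/a^{1+α}| ≤ C_α / M^{1+α}. -/

import Mathlib

open MeasureTheory Real

/-- `F α β = β/(β²+1) − (α/(β²+1)^{1−α/2}) ∫_{−arctan β}^{π/2} cos^α θ dθ`. -/
noncomputable def F (α β : ℝ) : ℝ :=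
  β / (β ^ 2 + 1) -
    α / (β ^ 2 + 1) ^ (1 - α / 2) * ∫ θ in (-Real.arctan β)..(Real.pi / 2), Real.cos θ ^ α

open Filter Set Topology

/-!
Integrating in `y₁` by the fundamental theorem of calculus and differentiating under the integral
sign turns `A″(a)` into the integral of `∂ₓk`, `k(z) = z₁ / |z|^{2+α}`, over the slanted side
`y₁ = β y₂` of the trapezoid, minus the one over its vertical side `y₁ = M`. The vertical side is at
distance at least `M / 2` from `(a, 0)`, and a point of the line `y₁ = β y₂` beyond the slanted side
is at distance at least `max(β, 1) y₂ / 2`, so replacing the two sides by the full ray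
`{y₁ = β y₂, y₂ > 0}` costs `O(M^{-1-α})`. On the ray, `(β² + 1) ∂ₓk` and `-α |z|^{-2-α}` differ by
an exact derivative, and substituting `(β² + 1) y₂ / a - β = tan θ` in the integral of
`|z|^{-2-α}` produces `F(α, β) / a^{1+α}`.
-/

theorem hasDerivAt_intervalIntegral_of_continuousOn {𝕜 E : Type*} [RCLike 𝕜]
    [NormedAddCommGroup E] [NormedSpace ℝ E] [NormedSpace 𝕜 E] {μ : Measure ℝ}
    [IsLocallyFiniteMeasure μ] {f f' : 𝕜 → ℝ → E} {b₀ : 𝕜} {U : Set 𝕜} {l r : ℝ}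
    (hU : U ∈ 𝓝 b₀) (hf : ∀ b ∈ U, ContinuousOn (f b) (uIcc l r))
    (hf' : ContinuousOn (Function.uncurry f') (U ×ˢ uIcc l r))
    (hderiv : ∀ b ∈ U, ∀ y ∈ uIcc l r, HasDerivAt (f · y) (f' b y) b) :
    HasDerivAt (fun b => ∫ y in l..r, f b y ∂μ) (∫ y in l..r, f' b₀ y ∂μ) b₀ := by
  obtain ⟨δ, hδ, hball⟩ := Metric.nhds_basis_closedBall.mem_iff.mp hU
  have hV : Metric.closedBall b₀ δ ∈ 𝓝 b₀ := Metric.closedBall_mem_nhds b₀ hδ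
  obtain ⟨B, hB⟩ := ((isCompact_closedBall b₀ δ).prod isCompact_uIcc).exists_bound_of_continuousOn
    (hf'.mono (prod_mono_left hball))
  have hf'₀ : ContinuousOn (f' b₀) (uIcc l r) :=
    hf'.comp (f := fun y => (b₀, y)) (by fun_prop) fun y hy => ⟨mem_of_mem_nhds hU, hy⟩
  refine (intervalIntegral.hasDerivAt_integral_of_dominated_loc_of_deriv_le
    (bound := fun _ => B) hV ?_ (hf b₀ (mem_of_mem_nhds hU)).intervalIntegrable
    hf'₀.intervalIntegrable.aestronglyMeasurable_restrict_uIoc ?_ intervalIntegrable_const ?_).2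
  · filter_upwards [hU] with b hb
    exact (hf b hb).intervalIntegrable.aestronglyMeasurable_restrict_uIoc
  · exact .of_forall fun y hy b hb => hB (b, y) ⟨hb, uIoc_subset_uIcc hy⟩
  · exact .of_forall fun y hy b hb => hderiv b (hball hb) y (uIoc_subset_uIcc hy)

theorem hasDerivAt_intervalIntegral_rpow {p c t : ℝ} (hc : 0 < c) (ht : 0 < t) :
    HasDerivAt (fun t => ∫ s in c..t, s ^ p) (t ^ p) t :=
  intervalIntegral.integral_hasDerivAt_right
    (intervalIntegral.intervalIntegrable_rpow (.inr (notMem_uIcc_of_lt hc ht)))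
    ((measurable_id.pow_const p).stronglyMeasurable.stronglyMeasurableAtFilter)
    (continuousAt_rpow_const t p (.inl ht.ne'))

theorem image_arctan_Ioi (c : ℝ) : arctan '' Ioi c = Ioo (arctan c) (π / 2) := by
  ext θ
  constructor
  · rintro ⟨u, hu, rfl⟩
    exact ⟨arctan_strictMono hu, arctan_lt_pi_div_two u⟩
  · rintro ⟨hc, hθ⟩
    have htan : arctan (tan θ) = θ := arctan_tan ((neg_pi_div_two_lt_arctan c).trans hc) hθ
    exact ⟨tan θ, arctan_strictMono.lt_iff_lt.mp (by rwa [htan]), htan⟩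

theorem integral_Ioi_one_add_sq_rpow (α c : ℝ) :
    ∫ u in Ioi c, (1 + u ^ 2) ^ (-(1 + α / 2)) = ∫ θ in (arctan c)..(π / 2), cos θ ^ α := by
  rw [intervalIntegral.integral_of_le (arctan_lt_pi_div_two c).le, integral_Ioc_eq_integral_Ioo,
    ← image_arctan_Ioi, integral_image_eq_integral_deriv_smul_of_monotoneOn measurableSet_Ioi
      (fun u _ => (hasDerivAt_arctan u).hasDerivWithinAt) (arctan_mono.monotoneOn _)]
  refine setIntegral_congr_fun measurableSet_Ioi fun u _ => ?_
  have hu : 0 < 1 + u ^ 2 := by positivity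
  simp only [smul_eq_mul]
  rw [cos_arctan, one_div, one_div, sqrt_eq_rpow, ← rpow_neg hu.le, ← rpow_mul hu.le,
    ← rpow_neg_one, ← rpow_add hu]
  ring_nf

section Line

variable {α β a : ℝ}

theorem sq_add_sq_on_line (ha : a ≠ 0) (β y : ℝ) :
    (a - β * y) ^ 2 + y ^ 2 =
      a ^ 2 / (β ^ 2 + 1) * (1 + ((β ^ 2 + 1) / a * y - β) ^ 2) := by
  field_simp
  ring

theorem rpow_sq_add_sq_on_line (ha : a ≠ 0) (p β y : ℝ) :
    ((a - β * y) ^ 2 + y ^ 2) ^ p =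
      (a ^ 2 / (β ^ 2 + 1)) ^ p * (1 + ((β ^ 2 + 1) / a * y - β) ^ 2) ^ p := by
  rw [sq_add_sq_on_line ha, mul_rpow (by positivity) (by positivity)]

theorem integrable_rpow_sq_add_sq_on_line (hα : -1 < α) (ha : a ≠ 0) (β : ℝ) :
    Integrable fun y => ((a - β * y) ^ 2 + y ^ 2) ^ (-(1 + α / 2)) := by
  have hbracket : Integrable fun u : ℝ => (1 + u ^ 2) ^ (-(1 + α / 2)) := by
    have h := integrable_rpow_neg_one_add_norm_sq (E := ℝ) (μ := volume) (r := 2 + α)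
      (by rw [Module.finrank_self]; push_cast; linarith)
    simpa only [norm_eq_abs, sq_abs, show -(2 + α) / 2 = -(1 + α / 2) by ring] using h
  have hscale : (β ^ 2 + 1) / a ≠ 0 := by positivity
  simp only [rpow_sq_add_sq_on_line ha]
  exact ((hbracket.comp_sub_right β).comp_mul_left' hscale).const_mul _

theorem integral_Ioi_rpow_sq_add_sq_on_line (ha : 0 < a) (α β : ℝ) :
    ∫ y in Ioi 0, ((a - β * y) ^ 2 + y ^ 2) ^ (-(1 + α / 2)) =
      (β ^ 2 + 1) ^ (α / 2) / a ^ (1 + α) * ∫ θ in (-arctan β)..(π / 2), cos θ ^ α := by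
  have hs : 0 < β ^ 2 + 1 := by positivity
  have hshift : ∫ v in Ioi 0, (1 + (v - β) ^ 2) ^ (-(1 + α / 2)) =
      ∫ u in Ioi (-β), (1 + u ^ 2) ^ (-(1 + α / 2)) := by
    rw [← (measurePreserving_sub_right volume β).setIntegral_preimage_emb
      (measurableEmbedding_subRight β) _ (Ioi (-β)), preimage_sub_const_Ioi, neg_add_cancel]
  have hconst : (a ^ 2 / (β ^ 2 + 1)) ^ (-(1 + α / 2)) * ((β ^ 2 + 1) / a)⁻¹ =
      (β ^ 2 + 1) ^ (α / 2) / a ^ (1 + α) := by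
    rw [rpow_neg (by positivity), div_rpow (by positivity) hs.le, ← rpow_natCast_mul ha.le,
      rpow_add hs, rpow_one, show ((2 : ℕ) : ℝ) * (1 + α / 2) = 1 + (1 + α) by push_cast; ring,
      rpow_add ha 1, rpow_one]
    field_simp
  simp only [rpow_sq_add_sq_on_line ha.ne']
  rw [integral_const_mul,
    integral_comp_mul_left_Ioi (fun v => (1 + (v - β) ^ 2) ^ (-(1 + α / 2))) 0 (by positivity),
    mul_zero, hshift, integral_Ioi_one_add_sq_rpow, arctan_neg, smul_eq_mul, ← mul_assoc, hconst]

end Line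

section Kernel

variable {α x y : ℝ}

/-- Up to an additive constant, the potential `-|z|^{-α} / α` at `z = (x, y)` (or `log |z|` if
`α = 0`). Integrating from `1` treats all `α` at once. -/
noncomputable def potential (α x y : ℝ) : ℝ :=
  (∫ s in 1..(x ^ 2 + y ^ 2), s ^ (-(1 + α / 2))) / 2

/-- The first component `x / |z|^{2+α}` of the velocity kernel at `z = (x, y)`. -/
noncomputable def kernel (α x y : ℝ) : ℝ :=
  x / (x ^ 2 + y ^ 2) ^ (1 + α / 2)

/-- The partial derivative of `kernel` in `x`. -/
noncomputable def kernelDeriv (α x y : ℝ) : ℝ :=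
  (y ^ 2 - (1 + α) * x ^ 2) / (x ^ 2 + y ^ 2) ^ (2 + α / 2)

theorem sq_add_sq_pos_of_ne_zero (h : (x, y) ≠ 0) : 0 < x ^ 2 + y ^ 2 := by
  rcases not_and_or.mp (Prod.mk_eq_zero.not.mp h) with hx | hy <;> positivity

theorem hasDerivAt_sq_add_sq_left (x y : ℝ) :
    HasDerivAt (fun x => x ^ 2 + y ^ 2) (2 * x) x := by
  simpa using (hasDerivAt_pow 2 x).add_const (y ^ 2)

theorem hasDerivAt_potential (α : ℝ) (h : (x, y) ≠ 0) :
    HasDerivAt (potential α · y) (kernel α x y) x := by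
  have hr := sq_add_sq_pos_of_ne_zero h
  refine (((hasDerivAt_intervalIntegral_rpow one_pos hr).comp x
    (hasDerivAt_sq_add_sq_left x y)).div_const 2).congr_deriv ?_
  rw [kernel, rpow_neg hr.le]
  ring

theorem hasDerivAt_kernel (α : ℝ) (h : (x, y) ≠ 0) :
    HasDerivAt (kernel α · y) (kernelDeriv α x y) x := by
  have hr := sq_add_sq_pos_of_ne_zero h
  refine ((hasDerivAt_id x).div ((hasDerivAt_sq_add_sq_left x y).rpow_const (.inl hr.ne'))
    (rpow_pos_of_pos hr _).ne').congr_deriv ?_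
  rw [kernelDeriv, id, add_sub_cancel_left, rpow_add hr, rpow_add hr, rpow_one, rpow_two]
  field_simp
  ring

theorem continuousOn_potential (α : ℝ) :
    ContinuousOn (Function.uncurry (potential α)) {0}ᶜ := fun p hp =>
  ContinuousAt.continuousWithinAt <| .div_const (.comp
    (f := fun p : ℝ × ℝ => p.1 ^ 2 + p.2 ^ 2)
    (hasDerivAt_intervalIntegral_rpow one_pos (sq_add_sq_pos_of_ne_zero hp)).continuousAt
    (by fun_prop)) 2

theorem continuousOn_div_sq_add_sq_rpow {n : ℝ × ℝ → ℝ} (hn : Continuous n) (p : ℝ) :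
    ContinuousOn (fun z : ℝ × ℝ => n z / (z.1 ^ 2 + z.2 ^ 2) ^ p) {0}ᶜ := by
  have hr : ∀ z ∈ ({0}ᶜ : Set (ℝ × ℝ)), 0 < z.1 ^ 2 + z.2 ^ 2 :=
    fun z hz => sq_add_sq_pos_of_ne_zero hz
  exact hn.continuousOn.div
    (.rpow_const (by fun_prop) fun z hz => .inl (hr z hz).ne')
    fun z hz => (rpow_pos_of_pos (hr z hz) p).ne'

theorem continuousOn_kernel (α : ℝ) : ContinuousOn (Function.uncurry (kernel α)) {0}ᶜ :=
  continuousOn_div_sq_add_sq_rpow continuous_fst _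

theorem continuousOn_kernelDeriv (α : ℝ) :
    ContinuousOn (Function.uncurry (kernelDeriv α)) {0}ᶜ :=
  continuousOn_div_sq_add_sq_rpow (n := fun z => z.2 ^ 2 - (1 + α) * z.1 ^ 2) (by fun_prop) _

theorem abs_kernelDeriv_le (hα : -1 ≤ α) (x y : ℝ) :
    |kernelDeriv α x y| ≤ (2 + α) * (x ^ 2 + y ^ 2) ^ (-(1 + α / 2)) := by
  have hnum : |y ^ 2 - (1 + α) * x ^ 2| ≤ (2 + α) * (x ^ 2 + y ^ 2) := by
    rw [abs_le]
    constructor <;> nlinarith [sq_nonneg x, sq_nonneg y, mul_nonneg (neg_le_iff_add_nonneg'.mp hα)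
      (sq_nonneg x), mul_nonneg (neg_le_iff_add_nonneg'.mp hα) (sq_nonneg y)]
  rcases eq_or_ne (x, y) 0 with h | h
  · obtain ⟨rfl, rfl⟩ := Prod.mk_eq_zero.mp h
    have hα₂ : 0 ≤ 2 + α := by linarith
    rw [show kernelDeriv α 0 0 = 0 by simp [kernelDeriv], abs_zero]
    positivity
  · have hr := sq_add_sq_pos_of_ne_zero h
    rw [kernelDeriv, abs_div, abs_of_pos (rpow_pos_of_pos hr _), div_le_iff₀ (by positivity),
      mul_assoc, ← rpow_add hr, show -(1 + α / 2) + (2 + α / 2) = 1 by ring, rpow_one]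
    exact hnum

theorem abs_kernelDeriv_le_of_sq_le {c : ℝ} (hα : -1 ≤ α) (hc : 0 < c)
    (h : c ^ 2 ≤ x ^ 2 + y ^ 2) : |kernelDeriv α x y| ≤ (2 + α) * c ^ (-(2 + α)) := by
  have hpow : (x ^ 2 + y ^ 2) ^ (-(1 + α / 2)) ≤ c ^ (-(2 + α)) := by
    rw [show -(2 + α) = (2 : ℕ) * -(1 + α / 2) by push_cast; ring, rpow_natCast_mul hc.le]
    exact rpow_le_rpow_of_nonpos (by positivity) h (by linarith)
  exact (abs_kernelDeriv_le hα x y).trans (by gcongr; linarith)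

end Kernel

section Translate

variable {E : Type*} [NormedAddCommGroup E] {g g' : ℝ → ℝ → E} {c : ℝ → ℝ} {b : ℝ}

theorem translate_ne_zero (hb : b ≠ c 0) (y : ℝ) : (b - c y, y) ≠ 0 := by
  intro h
  obtain ⟨h, rfl⟩ := Prod.mk_eq_zero.mp h
  exact hb (sub_eq_zero.mp h)

theorem continuous_translate (hg : ContinuousOn (Function.uncurry g) {0}ᶜ) (hc : Continuous c)
    (hb : b ≠ c 0) : Continuous fun y => g (b - c y) y :=
  hg.comp_continuous (f := fun y => (b - c y, y)) (by fun_prop) (translate_ne_zero hb)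

theorem hasDerivAt_intervalIntegral_translate [NormedSpace ℝ E]
    (hg : ContinuousOn (Function.uncurry g) {0}ᶜ) (hg' : ContinuousOn (Function.uncurry g') {0}ᶜ)
    (hderiv : ∀ x y, (x, y) ≠ 0 → HasDerivAt (g · y) (g' x y) x) (hc : Continuous c)
    (hb : b ≠ c 0) (l r : ℝ) :
    HasDerivAt (fun b => ∫ y in l..r, g (b - c y) y) (∫ y in l..r, g' (b - c y) y) b := by
  refine hasDerivAt_intervalIntegral_of_continuousOn (f' := fun b y => g' (b - c y) y)
    (isOpen_ne.mem_nhds hb) (fun b hb => (continuous_translate hg hc hb).continuousOn) ?_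
    fun b hb y _ => (hderiv _ _ (translate_ne_zero hb y)).comp_sub_const b (c y)
  exact hg'.comp (f := fun p : ℝ × ℝ => (p.1 - c p.2, p.2)) (by fun_prop)
    fun p hp => translate_ne_zero hp.1 p.2

end Translate

section Asymptotics

variable {α β a M : ℝ}

theorem continuous_kernelDeriv_on_line (α β : ℝ) (ha : a ≠ 0) :
    Continuous fun y => kernelDeriv α (a - β * y) y :=
  continuous_translate (continuousOn_kernelDeriv α) (c := (β * ·)) (by fun_prop) (by simpa)

theorem integrable_kernelDeriv_on_line (hα : -1 < α) (β : ℝ) (ha : a ≠ 0) :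
    Integrable fun y => kernelDeriv α (a - β * y) y :=
  ((integrable_rpow_sq_add_sq_on_line hα ha β).const_mul (2 + α)).mono'
    (continuous_kernelDeriv_on_line α β ha).aestronglyMeasurable
    (.of_forall fun y => abs_kernelDeriv_le hα.le _ y)

/-- The combination `β k + l` of the components `k = x / |z|^{2+α}` and `l = y / |z|^{2+α}` of the
gradient field `z / |z|^{2+α}`, at `z = (a - β y, y)`. Since the field is curl-free, its derivative
in `y` is `-(β² + 1) ∂ₓk` plus the divergence `-α |z|^{-2-α}` of the field. -/
noncomputable def linePrimitive (α β a y : ℝ) : ℝ :=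
  (β * (a - β * y) + y) / ((a - β * y) ^ 2 + y ^ 2) ^ (1 + α / 2)

theorem hasDerivAt_linePrimitive (α β : ℝ) (ha : a ≠ 0) (y : ℝ) :
    HasDerivAt (linePrimitive α β a)
      (-((β ^ 2 + 1) * kernelDeriv α (a - β * y) y
        + α * ((a - β * y) ^ 2 + y ^ 2) ^ (-(1 + α / 2)))) y := by
  have hr : 0 < (a - β * y) ^ 2 + y ^ 2 :=
    sq_add_sq_pos_of_ne_zero (translate_ne_zero (c := (β * ·)) (by simpa) y)
  have hline : HasDerivAt (fun y => a - β * y) (-β) y := by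
    simpa using ((hasDerivAt_id y).const_mul β).const_sub a
  have hnum : HasDerivAt (fun y => β * (a - β * y) + y) (β * -β + 1) y :=
    (hline.const_mul β).add (hasDerivAt_id y)
  have hden := ((hline.pow 2).add (hasDerivAt_pow 2 y)).rpow_const (p := 1 + α / 2) (.inl hr.ne')
  refine (hnum.div hden (rpow_pos_of_pos hr _).ne').congr_deriv ?_
  simp only [Pi.add_apply, Pi.pow_apply]
  rw [kernelDeriv, add_sub_cancel_left, rpow_neg hr.le, rpow_add hr, rpow_add hr, rpow_one,
    rpow_two]
  have hpow : 0 < ((a - β * y) ^ 2 + y ^ 2) ^ (α / 2) := rpow_pos_of_pos hr _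
  generalize ((a - β * y) ^ 2 + y ^ 2) ^ (α / 2) = w at hpow ⊢
  field_simp
  ring

theorem linePrimitive_zero (α β : ℝ) (ha : 0 < a) :
    linePrimitive α β a 0 = β / a ^ (1 + α) := by
  rw [linePrimitive, show (a - β * 0) ^ 2 + 0 ^ 2 = a ^ 2 by ring, ← rpow_natCast_mul ha.le,
    show ((2 : ℕ) : ℝ) * (1 + α / 2) = 1 + (1 + α) by push_cast; ring, rpow_add ha 1, rpow_one]
  field_simp
  ring

theorem tendsto_linePrimitive_atTop (hα : -1 < α) (β a : ℝ) :
    Tendsto (linePrimitive α β a) atTop (𝓝 0) := by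
  have hr : Tendsto (fun y : ℝ => (a - β * y) ^ 2 + y ^ 2) atTop atTop :=
    tendsto_atTop_mono (fun y => le_add_of_nonneg_left (sq_nonneg _))
      (tendsto_pow_atTop two_ne_zero)
  have hlim := ((tendsto_rpow_neg_atTop (y := (1 + α) / 2) (by linarith)).comp hr).const_mul
    (|β| + 1)
  rw [mul_zero] at hlim
  refine squeeze_zero_norm' ?_ hlim
  filter_upwards [hr.eventually_gt_atTop 0] with y hy
  have hnum : |β * (a - β * y) + y| ≤ (|β| + 1) * √((a - β * y) ^ 2 + y ^ 2) := by
    refine (abs_add_le _ _).trans ?_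
    rw [abs_mul, add_one_mul]
    gcongr <;> exact abs_le_sqrt (by nlinarith [sq_nonneg y, sq_nonneg (a - β * y)])
  rw [linePrimitive, norm_eq_abs, abs_div, abs_of_pos (rpow_pos_of_pos hy _),
    div_le_iff₀ (by positivity), Function.comp_apply, mul_assoc, ← rpow_add hy,
    show -((1 + α) / 2) + (1 + α / 2) = 1 / 2 by ring, ← sqrt_eq_rpow]
  exact hnum

theorem integral_Ioi_kernelDeriv_on_line (hα : -1 < α) (β : ℝ) (ha : 0 < a) :
    ∫ y in Ioi 0, kernelDeriv α (a - β * y) y = F α β / a ^ (1 + α) := by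
  have hs : 0 < β ^ 2 + 1 := by positivity
  have hK := ((integrable_kernelDeriv_on_line hα β ha.ne').const_mul (β ^ 2 + 1)).integrableOn
    (s := Ioi 0)
  have hr := ((integrable_rpow_sq_add_sq_on_line hα ha.ne' β).const_mul α).integrableOn
    (s := Ioi 0)
  have hftc := integral_Ioi_of_hasDerivAt_of_tendsto'
    (fun y _ => hasDerivAt_linePrimitive α β ha.ne' y) (hK.add hr).neg
    (tendsto_linePrimitive_atTop hα β a)
  rw [integral_neg, integral_add hK hr, integral_const_mul, integral_const_mul,
    integral_Ioi_rpow_sq_add_sq_on_line ha,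
    linePrimitive_zero α β ha] at hftc
  rw [F, rpow_sub hs, rpow_one]
  field_simp at hftc ⊢
  linear_combination -hftc

theorem sq_half_max_mul_le (haM : a ≤ M / 2) {y : ℝ} (hy₀ : 0 < y) (hy : M / max β 1 < y) :
    (max β 1 / 2 * y) ^ 2 ≤ (a - β * y) ^ 2 + y ^ 2 := by
  rcases le_total β 1 with h | h
  · rw [max_eq_right h]
    nlinarith [sq_nonneg (a - β * y), sq_nonneg y]
  · rw [max_eq_left h] at hy ⊢
    rw [div_lt_iff₀ (by positivity)] at hy
    have hdist : β / 2 * y ≤ β * y - a := by nlinarith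
    nlinarith [pow_le_pow_left₀ (by positivity) hdist 2, sq_nonneg y]

theorem abs_integral_Ioi_kernelDeriv_le (hα : -1 < α) (β : ℝ) (hM : 0 < M) (haM : a ≤ M / 2) :
    |∫ y in Ioi (M / max β 1), kernelDeriv α (a - β * y) y| ≤
      (2 + α) / (1 + α) * 2 ^ (2 + α) / M ^ (1 + α) := by
  set m := max β 1
  have hm : 1 ≤ m := le_max_right β 1
  have hm₀ : 0 < m / 2 := by positivity
  have hα₁ : 0 < 1 + α := by linarith
  have hM₂ : m / 2 * (M / m) = M / 2 := by field_simp
  have hint : IntegrableOn (fun y => (2 + α) * (m / 2 * y) ^ (-(2 + α))) (Ioi (M / m)) := by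
    refine Integrable.const_mul ?_ _
    rw [← IntegrableOn, integrableOn_Ioi_comp_mul_left_iff (· ^ (-(2 + α))) _ hm₀, hM₂]
    exact integrableOn_Ioi_rpow_of_lt (by linarith) (by positivity)
  have htwo : (2 : ℝ) ^ (2 + α) = 2 * 2 ^ (1 + α) := by
    rw [← rpow_one_add' zero_le_two (by linarith)]
    ring_nf
  have hval : ∫ y in Ioi (M / m), (2 + α) * (m / 2 * y) ^ (-(2 + α)) =
      (2 + α) / (1 + α) * 2 ^ (2 + α) / M ^ (1 + α) / m := by
    rw [integral_const_mul, integral_comp_mul_left_Ioi (· ^ (-(2 + α))) _ hm₀, hM₂,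
      integral_Ioi_rpow_of_lt (by linarith) (by positivity), smul_eq_mul,
      show -(2 + α) + 1 = -(1 + α) by ring, neg_div_neg_eq, rpow_neg (by positivity),
      div_rpow hM.le zero_le_two, htwo]
    field_simp
  calc |∫ y in Ioi (M / m), kernelDeriv α (a - β * y) y|
      ≤ ∫ y in Ioi (M / m), (2 + α) * (m / 2 * y) ^ (-(2 + α)) := by
        rw [← norm_eq_abs]
        refine norm_integral_le_of_norm_le hint ?_
        filter_upwards [ae_restrict_mem measurableSet_Ioi] with y hy
        have hy₀ : 0 < y := lt_trans (by positivity) hy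
        exact abs_kernelDeriv_le_of_sq_le hα.le (by positivity) (sq_half_max_mul_le haM hy₀ hy)
    _ = (2 + α) / (1 + α) * 2 ^ (2 + α) / M ^ (1 + α) / m := hval
    _ ≤ (2 + α) / (1 + α) * 2 ^ (2 + α) / M ^ (1 + α) :=
        div_le_self (div_nonneg (mul_nonneg (div_nonneg (by linarith) hα₁.le) (by positivity))
          (by positivity)) hm

theorem abs_integral_kernelDeriv_sub_le {L : ℝ} (hα : -1 ≤ α) (hL : 0 ≤ L) (hLM : L ≤ M)
    (hM : 0 < M) (haM : a ≤ M / 2) :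
    |∫ y in 0..L, kernelDeriv α (a - M) y| ≤ (2 + α) * 2 ^ (2 + α) / M ^ (1 + α) := by
  have hα₂ : 0 ≤ 2 + α := by linarith
  have hdist (y : ℝ) : (M / 2) ^ 2 ≤ (a - M) ^ 2 + y ^ 2 := by
    nlinarith [sq_nonneg y]
  have hpow : (M / 2) ^ (-(2 + α)) * M = 2 ^ (2 + α) / M ^ (1 + α) := by
    rw [rpow_neg (by positivity), div_rpow hM.le zero_le_two, show 1 + α = 2 + α - 1 by ring,
      rpow_sub_one hM.ne']
    field_simp
  calc |∫ y in 0..L, kernelDeriv α (a - M) y|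
      ≤ (2 + α) * (M / 2) ^ (-(2 + α)) * |L - 0| := by
        rw [← norm_eq_abs]
        exact intervalIntegral.norm_integral_le_of_norm_le_const fun y _ =>
          abs_kernelDeriv_le_of_sq_le hα (half_pos hM) (hdist y)
    _ ≤ (2 + α) * (M / 2) ^ (-(2 + α)) * M := by
        rw [sub_zero, abs_of_nonneg hL]
        gcongr
    _ = (2 + α) * 2 ^ (2 + α) / M ^ (1 + α) := by rw [mul_assoc, hpow, mul_div_assoc]

end Asymptotics

section Trapezoid

variable {α β M b : ℝ}

/-- The velocity component at `(b, 0)` induced by the unit patch on the trapezoid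
`{(y₁, y₂) | 0 < y₂ < M / max β 1, β * y₂ < y₁ < M}`. -/
noncomputable def trapezoidVelocity (α β M b : ℝ) : ℝ :=
  ∫ y₂ in Ioo 0 (M / max β 1),
    ∫ y₁ in Ioo (β * y₂) M, (b - y₁) / ((b - y₁) ^ 2 + y₂ ^ 2) ^ (1 + α / 2)

/-- The integral of `g (b - y₁) y₂` along the slanted side `y₁ = β * y₂` of the trapezoid minus the
one along its vertical side `y₁ = M`, both parametrized by `y₂`. -/
noncomputable def sideDifference (g : ℝ → ℝ → ℝ) (β M b : ℝ) : ℝ :=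
  (∫ y in 0..(M / max β 1), g (b - β * y) y) - ∫ y in 0..(M / max β 1), g (b - M) y

theorem hasDerivAt_sideDifference {g g' : ℝ → ℝ → ℝ}
    (hg : ContinuousOn (Function.uncurry g) {0}ᶜ) (hg' : ContinuousOn (Function.uncurry g') {0}ᶜ)
    (hderiv : ∀ x y, (x, y) ≠ 0 → HasDerivAt (g · y) (g' x y) x) (hb : b ≠ 0) (hbM : b ≠ M) :
    HasDerivAt (sideDifference g β M) (sideDifference g' β M b) b :=
  (hasDerivAt_intervalIntegral_translate hg hg' hderiv (c := (β * ·)) (by fun_prop)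
    (by simpa) _ _).sub
  (hasDerivAt_intervalIntegral_translate hg hg' hderiv (c := fun _ => M) (by fun_prop) hbM _ _)

theorem integral_Ioo_kernel {l r y : ℝ} (hlr : l ≤ r) (hy : y ≠ 0) (α b : ℝ) :
    ∫ t in Ioo l r, kernel α (b - t) y = potential α (b - l) y - potential α (b - r) y := by
  have hne (x : ℝ) : (x, y) ≠ 0 := fun h => hy (Prod.mk_eq_zero.mp h).2
  have hcont : Continuous fun x => kernel α x y :=
    (continuousOn_kernel α).comp_continuous (f := fun x => (x, y)) (by fun_prop) hne
  rw [← integral_Ioc_eq_integral_Ioo, ← intervalIntegral.integral_of_le hlr,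
    intervalIntegral.integral_comp_sub_left (kernel α · y)]
  exact intervalIntegral.integral_eq_sub_of_hasDerivAt
    (fun x _ => hasDerivAt_potential α (hne x)) (hcont.intervalIntegrable _ _)

theorem trapezoidVelocity_eq_sideDifference (α β : ℝ) (hM : 0 ≤ M) (hb : b ≠ 0) (hbM : b ≠ M) :
    trapezoidVelocity α β M b = sideDifference (potential α) β M b := by
  have hm : 0 < max β 1 := by positivity
  have hside (y : ℝ) (hy : y ∈ Ioo 0 (M / max β 1)) : β * y ≤ M :=
    calc β * y ≤ max β 1 * y := mul_le_mul_of_nonneg_right (le_max_left β 1) hy.1.le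
      _ ≤ M := ((lt_div_iff₀' hm).mp hy.2).le
  have hslant := (continuous_translate (continuousOn_potential α) (c := (β * ·)) (by fun_prop)
    (b := b) (by simpa)).intervalIntegrable (μ := volume) 0 (M / max β 1)
  have hvert := (continuous_translate (continuousOn_potential α) (c := fun _ => M) (by fun_prop)
    hbM).intervalIntegrable (μ := volume) 0 (M / max β 1)
  rw [sideDifference, ← intervalIntegral.integral_sub hslant hvert,
    intervalIntegral.integral_of_le (by positivity), integral_Ioc_eq_integral_Ioo]
  exact setIntegral_congr_fun measurableSet_Ioo fun y hy =>
    integral_Ioo_kernel (hside y hy) hy.1.ne' α b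

theorem hasDerivAt_trapezoidVelocity (α β : ℝ) (hM : 0 ≤ M) (hb : b ≠ 0) (hbM : b ≠ M) :
    HasDerivAt (trapezoidVelocity α β M) (sideDifference (kernel α) β M b) b := by
  refine (hasDerivAt_sideDifference (continuousOn_potential α) (continuousOn_kernel α)
    (fun _ _ => hasDerivAt_potential α) hb hbM).congr_of_eventuallyEq ?_
  filter_upwards [isOpen_ne.mem_nhds hb, isOpen_ne.mem_nhds hbM] with b hb hbM
  exact trapezoidVelocity_eq_sideDifference α β hM hb hbM

theorem hasDerivAt_deriv_trapezoidVelocity (α β : ℝ) (hM : 0 ≤ M) (hb : b ≠ 0) (hbM : b ≠ M) :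
    HasDerivAt (deriv (trapezoidVelocity α β M)) (sideDifference (kernelDeriv α) β M b) b := by
  refine (hasDerivAt_sideDifference (continuousOn_kernel α) (continuousOn_kernelDeriv α)
    (fun _ _ => hasDerivAt_kernel α) hb hbM).congr_of_eventuallyEq ?_
  filter_upwards [isOpen_ne.mem_nhds hb, isOpen_ne.mem_nhds hbM] with b hb hbM
  exact (hasDerivAt_trapezoidVelocity α β hM hb hbM).deriv

theorem abs_sideDifference_kernelDeriv_sub_le {a : ℝ} (hα : -1 < α) (β : ℝ) (ha : 0 < a)
    (haM : a ≤ M / 2) :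
    |sideDifference (kernelDeriv α) β M a - F α β / a ^ (1 + α)| ≤
      ((2 + α) / (1 + α) + (2 + α)) * 2 ^ (2 + α) / M ^ (1 + α) := by
  have hM : 0 < M := by linarith
  have hL : 0 ≤ M / max β 1 := by positivity
  have hint := integrable_kernelDeriv_on_line hα β ha.ne'
  rw [sideDifference, ← intervalIntegral.integral_Ioi_sub_Ioi hint.integrableOn hL,
    integral_Ioi_kernelDeriv_on_line hα β ha, sub_right_comm, sub_sub_cancel_left,
    add_mul, add_div]
  refine (abs_sub _ _).trans (add_le_add ?_ ?_)
  · rw [abs_neg]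
    exact abs_integral_Ioi_kernelDeriv_le hα β hM haM
  · exact abs_integral_kernelDeriv_sub_le hα.le hL (div_le_self hM.le (le_max_right β 1)) hM haM

end Trapezoid

theorem stmt14_general {α : ℝ} (hα : -1 < α) :
    ∃ C : ℝ, 0 < C ∧ ∀ β M a : ℝ, 0 < a → a ≤ M / 2 →
      DifferentiableAt ℝ (trapezoidVelocity α β M) a ∧
        DifferentiableAt ℝ (deriv (trapezoidVelocity α β M)) a ∧
        |deriv (deriv (trapezoidVelocity α β M)) a - F α β / a ^ (1 + α)| ≤ C / M ^ (1 + α) := by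
  have hα₁ : 0 < 1 + α := by linarith
  have hα₂ : 0 < 2 + α := by linarith
  refine ⟨((2 + α) / (1 + α) + (2 + α)) * 2 ^ (2 + α), by positivity, fun β M a ha haM => ?_⟩
  have hM : 0 ≤ M := by linarith
  have haM' : a ≠ M := by linarith
  have hderiv₂ := hasDerivAt_deriv_trapezoidVelocity α β hM ha.ne' haM'
  refine ⟨(hasDerivAt_trapezoidVelocity α β hM ha.ne' haM').differentiableAt,
    hderiv₂.differentiableAt, ?_⟩
  rw [hderiv₂.deriv]
  exact abs_sideDifference_kernelDeriv_sub_le hα β ha haM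

theorem stmt14 (α : ℝ) (hα0 : 0 ≤ α) (hα2 : α < 2) :
    ∃ C : ℝ, 0 < C ∧ ∀ β M : ℝ, 0 ≤ β → 0 < M →
      ∀ A : ℝ → ℝ,
        (∀ b : ℝ, A b = ∫ y₂ in Set.Ioo 0 (M / max β 1),
          ∫ y₁ in Set.Ioo (β * y₂) M, (b - y₁) / ((b - y₁) ^ 2 + y₂ ^ 2) ^ (1 + α / 2)) →
        ∀ a : ℝ, 0 < a → a ≤ M / 2 →
          DifferentiableAt ℝ A a ∧ DifferentiableAt ℝ (deriv A) a ∧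
          |deriv (deriv A) a - F α β / a ^ (1 + α)| ≤ C / M ^ (1 + α) := by
  obtain ⟨C, hC, h⟩ := stmt14_general (α := α) (by linarith)
  refine ⟨C, hC, fun β M _ _ A hA a ha haM => ?_⟩
  obtain rfl : A = trapezoidVelocity α β M := funext hA
  exact h β M a ha haM
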